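/- Let d ≥ 2 be an even integer. Then there exists a positive integer 𝐧 = 𝐧(d), depending only on d, with the following property: for every field K of characteristic zero containing all roots of unity, every d-dimensional K-vector space V, and every nondegenerate symmetric anisotropic K-bilinear form φ : V × V → K, every finite subgroup of PO(V,φ) = GO(V,φ)/(K*·1_V) has order dividing 2^{𝐧(d)}. In particular, PO(V,φ) is bounded. -/

import Mathlib

variable {K V : Type*} [Field K] [AddCommGroup V] [Module K V]

/-- The group of similitudes `GO(V,φ)`: the subgroup of the group of `K`-linear
automorphisms of `V` consisting of those `u` for which there is `μ ∈ K*` with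
`φ(ux,uy) = μ·φ(x,y)` for all `x,y ∈ V`. -/
def similitudeSubgroup (φ : LinearMap.BilinForm K V) : Subgroup (V ≃ₗ[K] V) where
  carrier := {u | ∃ μ : K, μ ≠ 0 ∧ ∀ x y : V, φ (u x) (u y) = μ * φ x y}
  one_mem' := ⟨1, one_ne_zero, fun x y => by rw [one_mul]; rfl⟩
  mul_mem' := by
    rintro u v ⟨μ, hμ, hu⟩ ⟨ν, hν, hv⟩
    refine ⟨μ * ν, mul_ne_zero hμ hν, fun x y => ?_⟩
    have h : φ ((u * v) x) ((u * v) y) = φ (u (v x)) (u (v y)) := rfl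
    rw [h, hu, hv]; ring
  inv_mem' := by
    rintro u ⟨μ, hμ, hu⟩
    refine ⟨μ⁻¹, inv_ne_zero hμ, fun x y => ?_⟩
    have h := hu ((u⁻¹ : V ≃ₗ[K] V) x) ((u⁻¹ : V ≃ₗ[K] V) y)
    rw [show u ((u⁻¹ : V ≃ₗ[K] V) x) = x from u.apply_symm_apply x,
      show u ((u⁻¹ : V ≃ₗ[K] V) y) = y from u.apply_symm_apply y] at h
    rw [h, inv_mul_cancel_left₀ hμ]

/-- The central subgroup `K*·1_V` of `GO(V,φ)` consisting of the nonzero scalar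
automorphisms. -/
def scalarSubgroup (φ : LinearMap.BilinForm K V) : Subgroup (similitudeSubgroup φ) where
  carrier := {u | ∃ c : K, c ≠ 0 ∧ ∀ x : V, (u : V ≃ₗ[K] V) x = c • x}
  one_mem' := ⟨1, one_ne_zero, fun x => by simp⟩
  mul_mem' := by
    rintro u v ⟨c, hc, hcu⟩ ⟨d, hd, hdv⟩
    refine ⟨c * d, mul_ne_zero hc hd, fun x => ?_⟩
    have h : ((u * v : similitudeSubgroup φ) : V ≃ₗ[K] V) x
        = (u : V ≃ₗ[K] V) ((v : V ≃ₗ[K] V) x) := rfl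
    rw [h, hdv, map_smul, hcu, smul_smul, mul_comm]
  inv_mem' := by
    rintro u ⟨c, hc, hcu⟩
    refine ⟨c⁻¹, inv_ne_zero hc, fun x => ?_⟩
    apply (u : V ≃ₗ[K] V).injective
    rw [show ((u⁻¹ : similitudeSubgroup φ) : V ≃ₗ[K] V) x = (u : V ≃ₗ[K] V).symm x from rfl,
      (u : V ≃ₗ[K] V).apply_symm_apply, map_smul, hcu, smul_smul, inv_mul_cancel₀ hc, one_smul]

instance scalarSubgroup_normal (φ : LinearMap.BilinForm K V) : (scalarSubgroup φ).Normal := by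
  constructor
  rintro n ⟨c, hc, hn⟩ g
  refine ⟨c, hc, fun x => ?_⟩
  have h1 : ((g * n * g⁻¹ : similitudeSubgroup φ) : V ≃ₗ[K] V) x
      = (g : V ≃ₗ[K] V) ((n : V ≃ₗ[K] V) ((g : V ≃ₗ[K] V).symm x)) := rfl
  rw [h1, hn, map_smul, (g : V ≃ₗ[K] V).apply_symm_apply]

/-- The projective orthogonal group `PO(V,φ) = GO(V,φ)/(K*·1_V)`. -/
abbrev projOrthogonalGroup (φ : LinearMap.BilinForm K V) :=
  similitudeSubgroup φ ⧸ scalarSubgroup φ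

/-! The eigenvalues of a similitude of an anisotropic form square to its multiplier. Since `K`
contains the roots of unity, an isometry of finite order is diagonalizable, so it is an involution;
applied to `μ⁻¹ u²` this gives `u⁴ = μ²` for every similitude `u` with multiplier `μ` and finite
order modulo scalars. Hence a finite subgroup of `PO(V,φ)` is a `2`-group. Its isometry classes
lift to commuting involutions, and there are at most `2 ^ d` of these. If `μ` is not a square in
`K`, then `u⁴ = μ²` forces all eigenvalues of `u` to lie on the line `K √μ`, hence `tr u = 0`.
Therefore representatives of distinct cosets of the isometries are orthogonal for the trace pairing
`(u, v) ↦ tr (u⁻¹ v)`, so they are linearly independent in `End V` and there are at most `d²` of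
them. -/

open Module

section JointEigenspaces

variable {ι : Type*} {f : ι → End K V}

/-- The space of common eigenvectors of a family `f` on which `f i` acts by the scalar `χ i`. -/
def jointEigenspace (f : ι → End K V) (χ : ι → K) : Submodule K V :=
  ⨅ i, (f i).eigenspace (χ i)

lemma apply_eq_smul_of_mem_jointEigenspace {χ : ι → K} {x : V} (hx : x ∈ jointEigenspace f χ)
    (i : ι) : f i x = χ i • x :=
  End.mem_eigenspace_iff.mp ((Submodule.mem_iInf _).mp hx i)

lemma iSupIndep_jointEigenspace (hcomm : ∀ i j, Commute (f i) (f j)) :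
    iSupIndep (jointEigenspace f) :=
  (End.independent_iInf_maxGenEigenspace_of_forall_mapsTo f fun i j μ =>
    End.mapsTo_maxGenEigenspace_of_comm (hcomm j i) μ).mono fun _ =>
      iInf_mono fun i => (f i).genEigenspace_le_maximal _ 1

variable [NeZero (2 : K)]

lemma iSup_eigenspace_eq_top_of_sq_eq_one {g : End K V} (hg : g ^ 2 = 1) :
    ⨆ μ, g.eigenspace μ = ⊤ := by
  have hgg (x : V) : g (g x) = x := by simpa [pow_two] using LinearMap.congr_fun hg x
  refine eq_top_iff.mpr fun x _ => ?_
  have hx : x = (2 : K)⁻¹ • (x + g x) + (2 : K)⁻¹ • (x - g x) := by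
    rw [← smul_add, add_add_sub_cancel, ← two_smul K x, inv_smul_smul₀ two_ne_zero]
  have hpos : x + g x ∈ g.eigenspace 1 := by simp [hgg, add_comm]
  have hneg : x - g x ∈ g.eigenspace (-1) := by simp [hgg]
  rw [hx]
  exact add_mem (Submodule.smul_mem _ _ (Submodule.mem_iSup_of_mem 1 hpos))
    (Submodule.smul_mem _ _ (Submodule.mem_iSup_of_mem (-1) hneg))

open Polynomial in
lemma maxGenEigenspace_eq_eigenspace_of_sq_eq_one {g : End K V} (hg : g ^ 2 = 1) (μ : K) :
    g.maxGenEigenspace μ = g.eigenspace μ := by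
  have hsqf : Squarefree (X ^ 2 - C 1 : K[X]) :=
    (separable_X_pow_sub_C 1 (by simpa using two_ne_zero) one_ne_zero).squarefree
  have hss : g.IsSemisimple :=
    End.isSemisimple_of_squarefree_aeval_eq_zero hsqf (by simp [hg])
  exact hss.isFinitelySemisimple.maxGenEigenspace_eq_eigenspace μ

variable [FiniteDimensional K V]

lemma iSup_jointEigenspace_eq_top_of_sq_eq_one (hsq : ∀ i, f i ^ 2 = 1)
    (hcomm : ∀ i j, Commute (f i) (f j)) : ⨆ χ, jointEigenspace f χ = ⊤ := by
  have h := End.iSup_iInf_maxGenEigenspace_eq_top_of_iSup_maxGenEigenspace_eq_top_of_commute f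
    fun i j _ => hcomm i j
  simp only [maxGenEigenspace_eq_eigenspace_of_sq_eq_one (hsq _)] at h
  exact h fun i => iSup_eigenspace_eq_top_of_sq_eq_one (hsq i)

lemma finite_and_card_le_two_pow_finrank_of_sq_eq_one (hinj : Function.Injective f)
    (hsq : ∀ i, f i ^ 2 = 1) (hcomm : ∀ i j, Commute (f i) (f j)) :
    Finite ι ∧ Nat.card ι ≤ 2 ^ finrank K V := by
  classical
  let W := {χ // jointEigenspace f χ ≠ ⊥}
  have hind := iSupIndep_jointEigenspace hcomm
  have : Fintype W := hind.fintypeNeBotOfFiniteDimensional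
  have hW : Fintype.card W ≤ finrank K V := hind.subtype_ne_bot_le_finrank
  have hsign (χ : W) (i : ι) : χ.1 i ∈ ({1, -1} : Finset K) := by
    obtain ⟨x, hx, hx0⟩ := (Submodule.ne_bot_iff _).mp χ.2
    have hfx := apply_eq_smul_of_mem_jointEigenspace hx i
    have hffx : (χ.1 i * χ.1 i) • x = (1 : K) • x := by
      simpa [pow_two, hfx, smul_smul] using LinearMap.congr_fun (hsq i) x
    simpa using mul_self_eq_one_iff.mp (smul_left_injective K hx0 hffx)
  let sign (i : ι) (χ : W) : ({1, -1} : Finset K) := ⟨χ.1 i, hsign χ i⟩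
  have hsign_inj : Function.Injective sign := by
    refine fun i j hij => hinj (LinearMap.eqLocus_eq_top.mp (eq_top_iff.mpr ?_))
    rw [← iSup_jointEigenspace_eq_top_of_sq_eq_one hsq hcomm]
    refine iSup_le fun χ x hx => ?_
    obtain rfl | hx0 := eq_or_ne x 0
    · exact zero_mem _
    have hχ : χ i = χ j :=
      congrArg Subtype.val (congrFun hij ⟨χ, (Submodule.ne_bot_iff _).mpr ⟨x, hx, hx0⟩⟩)
    rw [LinearMap.mem_eqLocus, apply_eq_smul_of_mem_jointEigenspace hx,
      apply_eq_smul_of_mem_jointEigenspace hx, hχ]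
  refine ⟨Finite.of_injective sign hsign_inj, ?_⟩
  calc Nat.card ι ≤ Nat.card (W → ({1, -1} : Finset K)) :=
        Nat.card_le_card_of_injective sign hsign_inj
    _ = Finset.card ({1, -1} : Finset K) ^ Fintype.card W := by
        rw [Nat.card_eq_fintype_card, Fintype.card_fun, Fintype.card_coe]
    _ ≤ 2 ^ finrank K V :=
        (Nat.pow_le_pow_left Finset.card_le_two _).trans (Nat.pow_le_pow_right two_pos hW)

end JointEigenspaces

open Polynomial in
lemma pow_eq_one_of_forall_hasEigenvalue [FiniteDimensional K V] {f : End K V} {m : ℕ}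
    (hm : 0 < m) (hfm : f ^ m = 1) {ζ : K} (hζ : IsPrimitiveRoot ζ m) {k : ℕ} (hk : 0 < k)
    (hroot : ∀ r, f.HasEigenvalue r → r ^ k = 1) : f ^ k = 1 := by
  have hm0 : (X ^ m - C 1 : K[X]) ≠ 0 := X_pow_sub_C_ne_zero hm 1
  have hk0 : (X ^ k - C 1 : K[X]) ≠ 0 := X_pow_sub_C_ne_zero hk 1
  have hdvd : minpoly K f ∣ X ^ m - C 1 := minpoly.dvd _ _ (by simp [hfm])
  have hsplits : (minpoly K f).Splits := (X_pow_sub_one_splits hζ).of_dvd hm0 hdvd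
  have hnodup : (minpoly K f).roots.Nodup :=
    Multiset.nodup_of_le (roots.le_of_dvd hm0 hdvd) hζ.nthRoots_one_nodup
  have hle : (minpoly K f).roots ≤ (X ^ k - C 1 : K[X]).roots := by
    refine (Multiset.le_iff_subset hnodup).mpr fun r hr => ?_
    have hr1 := hroot r (End.hasEigenvalue_of_isRoot (isRoot_of_mem_roots hr))
    rw [mem_roots hk0]
    simp [hr1]
  have hmin : minpoly K f ∣ X ^ k - C 1 :=
    hsplits.dvd_of_roots_le_roots (minpoly.ne_zero (Algebra.IsIntegral.isIntegral f)) hle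
  simpa [sub_eq_zero] using minpoly.dvd_iff.mp hmin

section Trace

variable [FiniteDimensional K V]

lemma exists_smul_eq_algebraMap_trace_of_pow_eq {L : Type*} [Field L] [Algebra K L]
    [IsAlgClosed L] {f : End K V} {n : ℕ} [NeZero n] {a : K} (hf : f ^ n = algebraMap K _ a)
    {ζ : K} (hζ : IsPrimitiveRoot ζ n) {s : L} (hs0 : s ≠ 0) (hs : s ^ n = algebraMap K L a) :
    ∃ x : K, x • s = algebraMap K L (LinearMap.trace K V f) := by
  set g : End L (TensorProduct K L V) := f.baseChange L
  have hg : g ^ n = algebraMap L _ (s ^ n) := by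
    have h := congrArg (End.baseChangeHom K L V) hf
    rwa [map_pow, AlgHom.commutes, IsScalarTower.algebraMap_apply K L, ← hs] at h
  have hroot : ∀ r ∈ g.charpoly.roots, r ∈ Submodule.span K {s} := by
    intro r hr
    have hgr : g.HasEigenvalue r :=
      (End.hasEigenvalue_iff_isRoot_charpoly g r).mpr (Polynomial.isRoot_of_mem_roots hr)
    obtain ⟨v, hv⟩ := hgr.exists_hasEigenvector
    have hrs : r ^ n = s ^ n := by
      have h := hv.pow_apply n
      rw [hg, Module.algebraMap_end_apply] at h
      exact smul_left_injective L hv.2 h.symm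
    have hdiv : (r / s) ^ n = 1 := by rw [div_pow, hrs, div_self (pow_ne_zero n hs0)]
    obtain ⟨k, -, hk⟩ := (hζ.map_of_injective (algebraMap K L).injective).eq_pow_of_pow_eq_one hdiv
    refine Submodule.mem_span_singleton.mpr ⟨ζ ^ k, ?_⟩
    rw [Algebra.smul_def, map_pow, hk, div_mul_cancel₀ r hs0]
  rw [← Submodule.mem_span_singleton, ← LinearMap.trace_baseChange,
    End.trace_eq_sum_roots_charpoly_of_splits (IsAlgClosed.splits _)]
  exact multiset_sum_mem _ hroot

lemma isSquare_of_pow_four_eq_of_trace_ne_zero {f : End K V} {μ : K} (hμ : μ ≠ 0)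
    (hf : f ^ 4 = algebraMap K _ (μ ^ 2)) {ζ : K} (hζ : IsPrimitiveRoot ζ 4)
    (htr : LinearMap.trace K V f ≠ 0) : IsSquare μ := by
  let L := AlgebraicClosure K
  obtain ⟨s, hs⟩ := IsAlgClosed.exists_pow_nat_eq (algebraMap K L μ) two_pos
  have hs0 : s ≠ 0 := by
    rintro rfl
    exact hμ ((map_eq_zero _).mp (hs.symm.trans (zero_pow two_ne_zero)))
  obtain ⟨x, hx⟩ := exists_smul_eq_algebraMap_trace_of_pow_eq hf hζ hs0
    (by rw [map_pow, ← hs]; ring)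
  have hsq : x ^ 2 * μ = LinearMap.trace K V f ^ 2 := by
    apply (algebraMap K L).injective
    rw [map_mul, map_pow, map_pow, ← hx, ← hs, Algebra.smul_def, mul_pow]
  have hx0 : x ≠ 0 := by
    rintro rfl
    exact htr (by simpa using hsq.symm)
  exact ⟨LinearMap.trace K V f / x, by field_simp; linear_combination hsq⟩

variable {Γ : Type*} [Group Γ] (ρ : Representation K Γ V)

lemma linearIndependent_of_trace_inv_mul_eq_zero (hd : (finrank K V : K) ≠ 0) {ι : Type*}
    {r : ι → Γ} (hr : ∀ p q, p ≠ q → LinearMap.trace K V (ρ ((r p)⁻¹ * r q)) = 0) :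
    LinearIndependent K fun q => ρ (r q) := by
  refine linearIndependent_iff'.mpr fun s a ha p hp => ?_
  have htr := congrArg (fun f => LinearMap.trace K V (ρ (r p)⁻¹ * f)) ha
  simp only [Finset.mul_sum, map_sum, mul_smul_comm, map_smul, mul_zero, map_zero,
    ← map_mul ρ] at htr
  rw [Finset.sum_eq_single_of_mem p hp fun q _ hq => by rw [hr p q hq.symm, smul_zero],
    inv_mul_cancel, map_one, LinearMap.trace_one] at htr
  exact (smul_eq_zero.mp htr).resolve_right hd

lemma index_le_finrank_sq_of_trace_eq_zero (hd : (finrank K V : K) ≠ 0) {H : Subgroup Γ}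
    (hH : ∀ g ∉ H, LinearMap.trace K V (ρ g) = 0) : H.index ≤ finrank K V ^ 2 := by
  have hli : LinearIndependent K fun q : Γ ⧸ H => ρ q.out := by
    refine linearIndependent_of_trace_inv_mul_eq_zero ρ hd fun p q hpq => hH _ fun hmem => hpq ?_
    rw [← p.out_eq', ← q.out_eq']
    exact QuotientGroup.eq.mpr hmem
  have := hli.finite
  have : Fintype (Γ ⧸ H) := Fintype.ofFinite _
  calc H.index = Fintype.card (Γ ⧸ H) := H.index_eq_card.trans Nat.card_eq_fintype_card
    _ ≤ finrank K (End K V) := hli.fintype_card_le_finrank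
    _ = finrank K V ^ 2 := by rw [finrank_linearMap, pow_two]

end Trace

variable {φ : LinearMap.BilinForm K V}

/-- `f` is a similitude of `φ` with multiplier `μ`; for `μ = 1` it is an isometry. -/
def IsSimilitudeWith (φ : LinearMap.BilinForm K V) (μ : K) (f : End K V) : Prop :=
  ∀ x y, φ (f x) (f y) = μ * φ x y

namespace IsSimilitudeWith

variable {μ ν : K} {f g : End K V}

lemma one : IsSimilitudeWith φ 1 1 := fun x y => by simp

lemma mul (hf : IsSimilitudeWith φ μ f) (hg : IsSimilitudeWith φ ν g) :
    IsSimilitudeWith φ (μ * ν) (f * g) := fun x y => by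
  rw [End.mul_apply, End.mul_apply, hf, hg, mul_assoc]

lemma pow (hf : IsSimilitudeWith φ μ f) (n : ℕ) : IsSimilitudeWith φ (μ ^ n) (f ^ n) := by
  induction n with
  | zero => simpa using one
  | succ n ih => simpa only [pow_succ] using ih.mul hf

lemma smul (hf : IsSimilitudeWith φ μ f) (c : K) : IsSimilitudeWith φ (c ^ 2 * μ) (c • f) :=
  fun x y => by
    simp only [LinearMap.smul_apply, map_smul, smul_eq_mul, hf x y]
    ring

variable (haniso : ∀ v : V, v ≠ 0 → φ v v ≠ 0)
include haniso

lemma sq_eq_of_hasEigenvalue (hf : IsSimilitudeWith φ μ f) {r : K} (hr : f.HasEigenvalue r) :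
    r ^ 2 = μ := by
  obtain ⟨v, hv⟩ := hr.exists_hasEigenvector
  have h := hf v v
  simp only [hv.apply_eq_smul, map_smul, LinearMap.smul_apply, smul_eq_mul] at h
  exact mul_right_cancel₀ (haniso v hv.2) (by rw [← h]; ring)

variable [FiniteDimensional K V] {m : ℕ} (hm : 0 < m) {ζ : K} (hζ : IsPrimitiveRoot ζ m)
include hm hζ

lemma sq_eq_one_of_pow_eq_one (hf : IsSimilitudeWith φ 1 f) (hfm : f ^ m = 1) : f ^ 2 = 1 :=
  pow_eq_one_of_forall_hasEigenvalue hm hfm hζ two_pos fun _ => hf.sq_eq_of_hasEigenvalue haniso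

lemma pow_four_eq (hf : IsSimilitudeWith φ μ f) (hμ : μ ≠ 0) {c : K}
    (hfm : f ^ m = algebraMap K _ c) : f ^ 4 = algebraMap K _ (μ ^ 2) := by
  cases subsingleton_or_nontrivial V
  · exact Subsingleton.elim _ _
  have hc : c ^ 2 = μ ^ m := (hf.pow m).sq_eq_of_hasEigenvalue haniso <| by
    obtain ⟨v, hv⟩ := exists_ne (0 : V)
    exact End.hasEigenvalue_of_hasEigenvector (x := v) ⟨by simp [hfm], hv⟩
  have hiso : IsSimilitudeWith φ 1 (μ⁻¹ • f ^ 2) := by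
    simpa [hμ] using (hf.pow 2).smul μ⁻¹
  have hpow : (μ⁻¹ • f ^ 2) ^ m = 1 := by
    rw [smul_pow, pow_right_comm, hfm, ← map_pow, hc, Algebra.algebraMap_eq_smul_one, smul_smul,
      ← mul_pow, inv_mul_cancel₀ hμ, one_pow, one_smul]
  have hsq := hiso.sq_eq_one_of_pow_eq_one haniso hm hζ hpow
  rw [smul_pow, ← pow_mul, inv_pow, inv_smul_eq_iff₀ (pow_ne_zero 2 hμ)] at hsq
  rw [hsq, Algebra.algebraMap_eq_smul_one]

end IsSimilitudeWith

section Similitudes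

/-- The tautological representation of the group of similitudes on `V`. -/
def similitudeRep (φ : LinearMap.BilinForm K V) : Representation K (similitudeSubgroup φ) V :=
  LinearEquiv.automorphismGroup.toLinearMapMonoidHom.comp (similitudeSubgroup φ).subtype

lemma similitudeRep_injective : Function.Injective (similitudeRep φ) := fun _ _ h =>
  Subtype.ext (LinearEquiv.toLinearMap_injective h)

lemma exists_isSimilitudeWith (u : similitudeSubgroup φ) :
    ∃ μ : K, μ ≠ 0 ∧ IsSimilitudeWith φ μ (similitudeRep φ u) :=
  u.2

lemma exists_similitudeRep_eq_algebraMap {c : K} (hc : c ≠ 0) :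
    ∃ s : similitudeSubgroup φ, similitudeRep φ s = algebraMap K _ c :=
  ⟨⟨LinearEquiv.smulOfNeZero K V c hc, c * c, mul_ne_zero hc hc, fun x y => by simp [mul_assoc]⟩,
    rfl⟩

lemma mem_scalarSubgroup_iff {u : similitudeSubgroup φ} :
    u ∈ scalarSubgroup φ ↔ ∃ c : K, similitudeRep φ u = algebraMap K _ c := by
  refine ⟨fun ⟨c, _, hu⟩ => ⟨c, LinearMap.ext hu⟩, fun ⟨c, hu⟩ => ?_⟩
  cases subsingleton_or_nontrivial V
  · exact ⟨1, one_ne_zero, fun x => Subsingleton.elim _ _⟩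
  refine ⟨c, ?_, LinearMap.congr_fun hu⟩
  rintro rfl
  obtain ⟨x, hx⟩ := exists_ne (0 : V)
  have hux : (u : V ≃ₗ[K] V) x = 0 := by
    have h := LinearMap.congr_fun hu x
    rwa [map_zero, LinearMap.zero_apply] at h
  exact hx ((u : V ≃ₗ[K] V).map_eq_zero_iff.mp hux)

/-- The orthogonal group `O(V,φ)`, as a subgroup of the group of similitudes. -/
def isometrySubgroup (φ : LinearMap.BilinForm K V) : Subgroup (similitudeSubgroup φ) where
  carrier := {u | IsSimilitudeWith φ 1 (similitudeRep φ u)}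
  one_mem' := by simpa using IsSimilitudeWith.one
  mul_mem' hu hv := by simpa using hu.mul hv
  inv_mem' {u} hu x y := by
    have h := hu (similitudeRep φ u⁻¹ x) (similitudeRep φ u⁻¹ y)
    simpa using h.symm

lemma mem_isometrySubgroup_sup_scalarSubgroup {u : similitudeSubgroup φ} {μ : K} (hμ : μ ≠ 0)
    (hu : IsSimilitudeWith φ μ (similitudeRep φ u)) (hsq : IsSquare μ) :
    u ∈ isometrySubgroup φ ⊔ scalarSubgroup φ := by
  obtain ⟨c, rfl⟩ := hsq
  have hc : c ≠ 0 := left_ne_zero_of_mul hμ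
  obtain ⟨s, hs⟩ := exists_similitudeRep_eq_algebraMap (φ := φ) (inv_ne_zero hc)
  have hiso : u * s ∈ isometrySubgroup φ := by
    have h := hu.smul c⁻¹
    rw [show c⁻¹ ^ 2 * (c * c) = 1 by field_simp] at h
    change IsSimilitudeWith φ 1 (similitudeRep φ (u * s))
    rwa [map_mul, hs, ← Algebra.commutes, ← Algebra.smul_def]
  simpa using Subgroup.mul_mem_sup hiso (inv_mem (mem_scalarSubgroup_iff.mpr ⟨_, hs⟩))

variable [FiniteDimensional K V] (hK : ∀ m : ℕ, 0 < m → ∃ ζ : K, IsPrimitiveRoot ζ m)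
  (haniso : ∀ v : V, v ≠ 0 → φ v v ≠ 0)
include hK haniso

lemma similitudeRep_pow_four {u : similitudeSubgroup φ} {μ : K} (hμ : μ ≠ 0)
    (hu : IsSimilitudeWith φ μ (similitudeRep φ u))
    (hfin : IsOfFinOrder (u : projOrthogonalGroup φ)) :
    similitudeRep φ u ^ 4 = algebraMap K _ (μ ^ 2) := by
  obtain ⟨m, hm, hum⟩ := isOfFinOrder_iff_pow_eq_one.mp hfin
  rw [← QuotientGroup.mk_pow, QuotientGroup.eq_one_iff, mem_scalarSubgroup_iff] at hum
  obtain ⟨c, hc⟩ := hum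
  obtain ⟨ζ, hζ⟩ := hK m hm
  exact hu.pow_four_eq haniso hm hζ hμ (by rw [← map_pow, hc])

lemma sq_eq_one_of_mem_isometrySubgroup {u : similitudeSubgroup φ} (hu : u ∈ isometrySubgroup φ)
    (hfin : IsOfFinOrder (u : projOrthogonalGroup φ)) : u ^ 2 = 1 := by
  obtain ⟨ζ, hζ⟩ := hK 4 four_pos
  have hu4 : similitudeRep φ u ^ 4 = 1 := by
    simpa using similitudeRep_pow_four hK haniso one_ne_zero hu hfin
  apply similitudeRep_injective
  rw [map_pow, map_one]
  exact IsSimilitudeWith.sq_eq_one_of_pow_eq_one haniso four_pos hζ hu hu4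

lemma mem_isometrySubgroup_sup_scalarSubgroup_of_trace_ne_zero {u : similitudeSubgroup φ}
    (hfin : IsOfFinOrder (u : projOrthogonalGroup φ))
    (htr : LinearMap.trace K V (similitudeRep φ u) ≠ 0) :
    u ∈ isometrySubgroup φ ⊔ scalarSubgroup φ := by
  obtain ⟨μ, hμ, hu⟩ := exists_isSimilitudeWith u
  obtain ⟨ζ, hζ⟩ := hK 4 four_pos
  exact mem_isometrySubgroup_sup_scalarSubgroup hμ hu <|
    isSquare_of_pow_four_eq_of_trace_ne_zero hμ (similitudeRep_pow_four hK haniso hμ hu hfin) hζ htr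

lemma isPGroup_two (G : Subgroup (projOrthogonalGroup φ)) [Finite G] : IsPGroup 2 G := by
  rintro ⟨g, hg⟩
  obtain ⟨u, rfl⟩ := QuotientGroup.mk_surjective g
  obtain ⟨μ, hμ, hu⟩ := exists_isSimilitudeWith u
  have hu4 := similitudeRep_pow_four hK haniso hμ hu
    (Submonoid.isOfFinOrder_coe.mpr (isOfFinOrder_of_finite (⟨_, hg⟩ : G)))
  refine ⟨2, Subtype.ext ?_⟩
  change (u : projOrthogonalGroup φ) ^ 4 = 1
  rw [← QuotientGroup.mk_pow, QuotientGroup.eq_one_iff, mem_scalarSubgroup_iff]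
  exact ⟨μ ^ 2, by rw [map_pow, hu4]⟩

section Torsion

variable {Γ : Subgroup (similitudeSubgroup φ)}
  (hΓ : ∀ u ∈ Γ, IsOfFinOrder (u : projOrthogonalGroup φ))
include hΓ

lemma finite_and_card_isometrySubgroup_inf_le [NeZero (2 : K)] :
    Finite ↥(isometrySubgroup φ ⊓ Γ) ∧
      Nat.card ↥(isometrySubgroup φ ⊓ Γ) ≤ 2 ^ finrank K V := by
  have hsq (a : ↥(isometrySubgroup φ ⊓ Γ)) : a ^ 2 = 1 :=
    Subtype.ext (sq_eq_one_of_mem_isometrySubgroup hK haniso a.2.1 (hΓ _ a.2.2))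
  let ρ := (similitudeRep φ).comp (isometrySubgroup φ ⊓ Γ).subtype
  refine finite_and_card_le_two_pow_finrank_of_sq_eq_one (f := ρ)
    (similitudeRep_injective.comp Subtype.val_injective)
    (fun a => by rw [← map_pow, hsq, map_one]) fun a b => ?_
  exact (Commute.of_orderOf_dvd_two (fun a => orderOf_dvd_of_pow_eq_one (hsq a)) a b).map ρ

lemma relIndex_isometrySubgroup_sup_scalarSubgroup_le [CharZero K] [Nontrivial V] :
    (isometrySubgroup φ ⊔ scalarSubgroup φ).relIndex Γ ≤ finrank K V ^ 2 := by
  refine index_le_finrank_sq_of_trace_eq_zero ((similitudeRep φ).comp Γ.subtype)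
    (Nat.cast_ne_zero.mpr finrank_pos.ne') fun u hu => ?_
  contrapose! hu
  exact mem_isometrySubgroup_sup_scalarSubgroup_of_trace_ne_zero hK haniso (hΓ u u.2) hu

end Torsion

lemma card_le_two_pow_mul_sq [CharZero K] [Nontrivial V]
    (G : Subgroup (projOrthogonalGroup φ)) [Finite G] :
    Nat.card G ≤ 2 ^ finrank K V * finrank K V ^ 2 := by
  let π := QuotientGroup.mk' (scalarSubgroup φ)
  have hπ : Function.Surjective π := QuotientGroup.mk'_surjective _
  let I := isometrySubgroup φ
  have hfin : ∀ u ∈ G.comap π, IsOfFinOrder (u : projOrthogonalGroup φ) := fun u hu =>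
    Submonoid.isOfFinOrder_coe.mpr (isOfFinOrder_of_finite (⟨_, hu⟩ : G))
  have hinter : Nat.card ↥(I.map π ⊓ G) ≤ 2 ^ finrank K V := by
    obtain ⟨_, hI⟩ := finite_and_card_isometrySubgroup_inf_le hK haniso hfin
    have hmap : I.map π ⊓ G = (I ⊓ G.comap π).map π :=
      SetLike.coe_injective (by simp [Set.image_inter_preimage])
    rw [hmap]
    exact (Nat.le_of_dvd Nat.card_pos (Subgroup.card_map_dvd _ π)).trans hI
  have hindex : (I.map π).relIndex G ≤ finrank K V ^ 2 := by
    rw [← Subgroup.map_comap_eq_self_of_surjective hπ G, ← Subgroup.relIndex_comap,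
      Subgroup.comap_map_eq, QuotientGroup.ker_mk']
    exact relIndex_isometrySubgroup_sup_scalarSubgroup_le hK haniso hfin
  calc Nat.card G = Nat.card ↥(I.map π ⊓ G) * (I.map π).relIndex G := by
        simpa using (Subgroup.relIndex_inf_mul_relIndex ⊥ (I.map π) G).symm
    _ ≤ 2 ^ finrank K V * finrank K V ^ 2 := Nat.mul_le_mul hinter hindex

end Similitudes

theorem stmt12_general [CharZero K] [FiniteDimensional K V]
    (hK : ∀ m : ℕ, 0 < m → ∃ ζ : K, IsPrimitiveRoot ζ m)
    (haniso : ∀ v : V, v ≠ 0 → φ v v ≠ 0)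
    (G : Subgroup (projOrthogonalGroup φ)) [Finite G] :
    Nat.card G ∣ 2 ^ (3 * finrank K V) := by
  cases subsingleton_or_nontrivial V
  · have : Subsingleton (similitudeSubgroup φ) := similitudeRep_injective.subsingleton
    have : Subsingleton (projOrthogonalGroup φ) := QuotientGroup.mk_surjective.subsingleton
    simp
  obtain ⟨k, hk⟩ := IsPGroup.iff_card.mp (isPGroup_two hK haniso G)
  rw [hk, Nat.pow_dvd_pow_iff_le_right one_lt_two, ← Nat.pow_le_pow_iff_right one_lt_two, ← hk]
  calc Nat.card G ≤ 2 ^ finrank K V * finrank K V ^ 2 := card_le_two_pow_mul_sq hK haniso G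
    _ ≤ 2 ^ finrank K V * (2 ^ finrank K V) ^ 2 := by gcongr; exact Nat.lt_two_pow_self.le
    _ = 2 ^ (3 * finrank K V) := by ring

/-- Let `d ≥ 2` be an even integer. Then there exists a positive
integer `𝐧 = 𝐧(d)`, depending only on `d`, with the following property: for every field
`K` of characteristic zero containing all roots of unity, every `d`-dimensional
`K`-vector space `V`, and every nondegenerate symmetric anisotropic `K`-bilinear form
`φ` on `V`, every finite subgroup of `PO(V,φ) = GO(V,φ)/(K*·1_V)` has order dividing
`2 ^ 𝐧(d)`. In particular, `PO(V,φ)` is bounded. -/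
theorem stmt12 (d : ℕ) (hd2 : 2 ≤ d) (hdeven : Even d) :
    ∃ n : ℕ, 0 < n ∧
      ∀ (K V : Type*) [Field K] [CharZero K] [AddCommGroup V] [Module K V]
        [FiniteDimensional K V], Module.finrank K V = d →
        (∀ m : ℕ, 0 < m → ∃ ζ : K, IsPrimitiveRoot ζ m) →
        ∀ φ : LinearMap.BilinForm K V,
          (∀ x y : V, φ x y = φ y x) →
          (∀ x : V, (∀ y : V, φ x y = 0) → x = 0) →
          (∀ v : V, v ≠ 0 → φ v v ≠ 0) →
          ∀ G : Subgroup (projOrthogonalGroup φ), Finite G →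
            Nat.card G ∣ 2 ^ n :=
  ⟨3 * d, by omega, fun K V _ _ _ _ _ hd hK φ _ _ haniso G _ => hd ▸ stmt12_general hK haniso G⟩
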